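/- arXiv:2211.03292 — 3 statements merged into one kernel-verified Lean document; each statement's English description precedes it below -/
import Mathlib

section
/- For 0 <= k <= n/2, the sum of binomial coefficients C(n,0) + C(n,1) + ... + C(n,k) is at most 2^{H(k/n) * n}, where H(x) = x*log2(1/x) + (1-x)*log2(1/(1-x)) is the binary entropy function (with H(0)=0). -/
/-- The binary entropy function `H(x) = x log₂(1/x) + (1-x) log₂(1/(1-x))`
(with the convention `H(0) = 0`, which holds automatically since `1/0 = 0`
and `log 0 = 0` in Lean). -/
noncomputable def binH (x : ℝ) : ℝ :=
  x * Real.logb 2 (1 / x) + (1 - x) * Real.logb 2 (1 / (1 - x))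

/-!
Let each of `n` independent trials succeed with probability `α ≤ 1/2`. A prescribed outcome with `i`
successes has probability `α ^ i * (1 - α) ^ (n - i)`. This does not increase with `i`, so for
`i ≤ α * n` it is at least its value `2 ^ (-H(α) * n)` at `i = α * n`. The outcomes with at most
`k ≤ α * n` successes have total probability at most `1`, so there are at most `2 ^ (H(α) * n)` of
them.
-/

theorem binH_eq_binEntropy_div_log (x : ℝ) : binH x = Real.binEntropy x / Real.log 2 := by
  simp only [binH, Real.binEntropy, Real.logb, one_div]
  ring

theorem two_rpow_binH_mul (x t : ℝ) :
    (2 : ℝ) ^ (binH x * t) = Real.exp (Real.binEntropy x * t) := by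
  have log_two_ne_zero : Real.log 2 ≠ 0 := (Real.log_pos one_lt_two).ne'
  rw [Real.rpow_def_of_pos two_pos, binH_eq_binEntropy_div_log]
  congr 1
  field_simp

theorem sum_pow_mul_pow_mul_choose_le_add_pow {R : Type*} [CommSemiring R] [PartialOrder R]
    [IsOrderedRing R] {x y : R} (hx : 0 ≤ x) (hy : 0 ≤ y) (n : ℕ) (s : Finset ℕ) :
    ∑ i ∈ s, x ^ i * y ^ (n - i) * (n.choose i : R) ≤ (x + y) ^ n := by
  calc ∑ i ∈ s, x ^ i * y ^ (n - i) * (n.choose i : R)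
      ≤ ∑ i ∈ s ∪ Finset.range (n + 1), x ^ i * y ^ (n - i) * (n.choose i : R) :=
        Finset.sum_le_sum_of_subset_of_nonneg Finset.subset_union_left fun i _ _ ↦ by positivity
    _ = ∑ i ∈ Finset.range (n + 1), x ^ i * y ^ (n - i) * (n.choose i : R) := by
        refine (Finset.sum_subset Finset.subset_union_right fun i _ hi ↦ ?_).symm
        have n_lt_i : n < i := by simpa [Nat.lt_succ_iff] using hi
        rw [Nat.choose_eq_zero_of_lt n_lt_i, Nat.cast_zero, mul_zero]
    _ = (x + y) ^ n := (add_pow x y n).symm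

theorem neg_binEntropy_mul_le_mul_log_add_mul_log {α s t : ℝ} (hα₀ : 0 < α) (hα : α ≤ 1 / 2)
    (hs : s ≤ α * t) :
    -(Real.binEntropy α * t) ≤ s * Real.log α + (t - s) * Real.log (1 - α) := by
  have log_le : Real.log α ≤ Real.log (1 - α) := Real.log_le_log hα₀ (by linarith)
  have gap_nonneg : 0 ≤ (α * t - s) * (Real.log (1 - α) - Real.log α) :=
    mul_nonneg (sub_nonneg.2 hs) (sub_nonneg.2 log_le)
  simp only [Real.binEntropy, Real.log_inv]
  linarith

theorem exp_neg_binEntropy_mul_le_pow_mul_pow {α : ℝ} {n i : ℕ} (hα₀ : 0 ≤ α) (hα : α ≤ 1 / 2)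
    (hi : (i : ℝ) ≤ α * n) :
    Real.exp (-(Real.binEntropy α * n)) ≤ α ^ i * (1 - α) ^ (n - i) := by
  rcases hα₀.eq_or_lt with rfl | hα₀
  · have i_eq_zero : i = 0 := by simpa using hi
    simp [i_eq_zero]
  · have one_sub_pos : 0 < 1 - α := by linarith
    have i_le_n : i ≤ n := by
      have : α * (n : ℝ) ≤ n := mul_le_of_le_one_left n.cast_nonneg (by linarith)
      exact_mod_cast hi.trans this
    rw [← Real.le_log_iff_exp_le (by positivity), Real.log_mul (by positivity) (by positivity),
      Real.log_pow, Real.log_pow, Nat.cast_sub i_le_n]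
    exact neg_binEntropy_mul_le_mul_log_add_mul_log hα₀ hα hi

theorem stmt8_general {α : ℝ} {n k : ℕ} (hα₀ : 0 ≤ α) (hα : α ≤ 1 / 2) (hk : (k : ℝ) ≤ α * n) :
    (∑ i ∈ Finset.range (k + 1), (n.choose i : ℝ)) ≤ (2 : ℝ) ^ (binH α * n) := by
  rw [two_rpow_binH_mul, ← one_mul (Real.exp _), ← div_le_iff₀ (Real.exp_pos _), div_eq_inv_mul,
    ← Real.exp_neg, Finset.mul_sum]
  calc ∑ i ∈ Finset.range (k + 1), Real.exp (-(Real.binEntropy α * n)) * (n.choose i : ℝ)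
      ≤ ∑ i ∈ Finset.range (k + 1), α ^ i * (1 - α) ^ (n - i) * (n.choose i : ℝ) := by
        refine Finset.sum_le_sum fun i hi ↦ mul_le_mul_of_nonneg_right ?_ (Nat.cast_nonneg _)
        have i_le_k : (i : ℝ) ≤ k := by exact_mod_cast Finset.mem_range_succ_iff.1 hi
        exact exp_neg_binEntropy_mul_le_pow_mul_pow hα₀ hα (i_le_k.trans hk)
    _ ≤ (α + (1 - α)) ^ n := sum_pow_mul_pow_mul_choose_le_add_pow hα₀ (by linarith) n _
    _ = 1 := by rw [add_sub_cancel, one_pow]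

theorem stmt8 (n k : ℕ) (hn : 0 < n) (hk : 2 * k ≤ n) :
    (∑ i ∈ Finset.range (k + 1), (n.choose i : ℝ)) ≤
      (2 : ℝ) ^ (binH ((k : ℝ) / (n : ℝ)) * (n : ℝ)) := by
  have hn' : (0 : ℝ) < n := Nat.cast_pos.2 hn
  have hk' : 2 * (k : ℝ) ≤ n := by exact_mod_cast hk
  have ratio_le_half : (k : ℝ) / n ≤ 1 / 2 := (div_le_iff₀ hn').2 (by linarith)
  exact stmt8_general (by positivity) ratio_le_half (div_mul_cancel₀ _ hn'.ne').ge
end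

section
/- There exists a constant c <= 0.88999 such that for all sufficiently large n and every binary string z of length n, the probability over a uniform random X in {0,1}^n that |LCS(X, z)| >= 0.88999*n is o(1). Consequently, max_z E_X[|LCS(X,z)|] <= (0.88999 + o(1)) * n. -/
/-- Length of a longest common subsequence of two binary strings. -/
noncomputable def lcsLen (x y : List Bool) : ℕ :=
  sSup {n | ∃ s : List Bool, s.length = n ∧ s.Sublist x ∧ s.Sublist y}

/-!
Each letter of a uniformly random word over `q` letters advances the greedy matching of a given
word `s` with probability `1 / q`, independently of the past. Weighting an advance by `t ≥ 1` bounds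
the number of words of length `n` containing `s` by `(q - 1 + t) ^ n / t ^ |s|`, and a union bound
over the `C(n, m) ≤ (1 + u) ^ n / u ^ m` subsequences of `z` of length `m` bounds the number of `x`
with `|LCS(x, z)| ≥ m`. For `m ≥ γ n` the optimal weights `u = γ / (1 - γ)` and `t = (q - 1) u` turn
these bounds into the entropies of `γ`, and the result is exponentially smaller than `q ^ n` as soon
as the two entropies add up to less than `log q`. For `q = 2` this reads `2 H(γ) < log 2`, which
`γ = 0.88999` just satisfies.
-/

open Finset Real

section Supersequences

variable {α : Type*} [Fintype α] [DecidableEq α]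

/-- The words of length `n` over the alphabet `α`, encoded as functions on `Fin n`, that contain `s`
as a (not necessarily contiguous) subsequence. They are the outcomes counted in the union bound. -/
def supersequences (n : ℕ) (s : List α) : Finset (Fin n → α) :=
  {x | s.Sublist (List.ofFn x)}

theorem mem_supersequences {n : ℕ} {s : List α} {x : Fin n → α} :
    x ∈ supersequences n s ↔ s.Sublist (List.ofFn x) := by
  simp only [supersequences, mem_filter_univ]

theorem supersequences_nil (n : ℕ) : supersequences n ([] : List α) = univ := by
  simp only [supersequences, List.nil_sublist, filter_true]

theorem supersequences_zero_cons (a : α) (s : List α) : supersequences 0 (a :: s) = ∅ := by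
  simp [supersequences]

theorem cons_mem_supersequences_cons {n : ℕ} {a b : α} {s : List α} {x : Fin n → α} :
    (Fin.cons b x : Fin (n + 1) → α) ∈ supersequences (n + 1) (a :: s) ↔
      x ∈ supersequences n (if b = a then s else a :: s) := by
  rw [mem_supersequences, mem_supersequences, List.ofFn_cons]
  split_ifs with h
  · rw [h, List.cons_sublist_cons]
  · simp [List.cons_sublist_cons', Ne.symm h]

theorem card_supersequences_succ_cons (n : ℕ) (a : α) (s : List α) :
    (#(supersequences (n + 1) (a :: s)) : ℝ) =
      #(supersequences n s) + (Fintype.card α - 1) * #(supersequences n (a :: s)) := by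
  have by_head : #(supersequences (n + 1) (a :: s)) =
      ∑ b, #(supersequences n (if b = a then s else a :: s)) := by
    rw [← card_sigma]
    refine (card_equiv ((Equiv.sigmaEquivProd _ _).trans (Fin.consEquiv fun _ => α)) ?_).symm
    rintro ⟨b, x⟩
    simp only [mem_sigma, mem_univ, true_and]
    exact cons_mem_supersequences_cons.symm
  have other_head : ∀ b ∈ univ.erase a,
      (#(supersequences n (if b = a then s else a :: s)) : ℝ) = #(supersequences n (a :: s)) :=
    fun b hb => by rw [if_neg (ne_of_mem_erase hb)]
  have : Nonempty α := ⟨a⟩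
  rw [by_head, Nat.cast_sum, ← add_sum_erase _ _ (mem_univ a), if_pos rfl,
    sum_congr rfl other_head, sum_const, card_erase_of_mem (mem_univ a), card_univ, nsmul_eq_mul,
    Nat.cast_pred Fintype.card_pos]

theorem card_supersequences_mul_pow_le {t : ℝ} (ht : 1 ≤ t) (n : ℕ) (s : List α) :
    #(supersequences n s) * t ^ s.length ≤ (Fintype.card α - 1 + t) ^ n := by
  induction n generalizing s with
  | zero => cases s <;> simp [supersequences_nil, supersequences_zero_cons]
  | succ n ih =>
    cases s with
    | nil =>
      rw [supersequences_nil, card_univ, Fintype.card_fun, Fintype.card_fin, List.length_nil,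
        pow_zero, mul_one, Nat.cast_pow]
      gcongr
      linarith
    | cons a s =>
      have card_pos : (1 : ℝ) ≤ Fintype.card α := by
        exact_mod_cast Fintype.card_pos_iff.2 ⟨a⟩
      calc (#(supersequences (n + 1) (a :: s)) : ℝ) * t ^ (a :: s).length
          = t * (#(supersequences n s) * t ^ s.length) + (Fintype.card α - 1) *
              (#(supersequences n (a :: s)) * t ^ (a :: s).length) := by
            rw [card_supersequences_succ_cons, List.length_cons]; ring
        _ ≤ t * (Fintype.card α - 1 + t) ^ n +
              (Fintype.card α - 1) * (Fintype.card α - 1 + t) ^ n := by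
            gcongr
            · exact ih s
            · exact ih (a :: s)
        _ = (Fintype.card α - 1 + t) ^ (n + 1) := by ring

end Supersequences

theorem choose_mul_pow_le {R : Type*} [CommSemiring R] [PartialOrder R] [IsOrderedRing R] {u : R}
    (hu : 0 ≤ u) (n m : ℕ) : n.choose m * u ^ m ≤ (1 + u) ^ n := by
  rcases lt_or_ge n m with h | h
  · rw [Nat.choose_eq_zero_of_lt h, Nat.cast_zero, zero_mul]
    exact pow_nonneg (add_nonneg zero_le_one hu) n
  · calc n.choose m * u ^ m = u ^ m * n.choose m := mul_comm _ _
      _ ≤ ∑ k ∈ range (n + 1), u ^ k * n.choose k :=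
        single_le_sum (f := fun k => u ^ k * (n.choose k : R))
          (fun k _ => mul_nonneg (pow_nonneg hu k) (Nat.cast_nonneg _))
          (mem_range.2 (Nat.lt_succ_of_le h))
      _ = (1 + u) ^ n := by simp only [add_comm 1 u, add_pow, one_pow, mul_one]

section LCS

variable {α : Type*}

/-- Length of a longest common subsequence of two words over an arbitrary alphabet, extending
`lcsLen` beyond binary strings. -/
noncomputable def lcsLength (x y : List α) : ℕ :=
  sSup {n | ∃ s : List α, s.length = n ∧ s.Sublist x ∧ s.Sublist y}

theorem lcsLen_eq_lcsLength : lcsLen = lcsLength := rfl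

theorem exists_sublist_length_eq_lcsLength (x y : List α) :
    ∃ s : List α, s.length = lcsLength x y ∧ s.Sublist x ∧ s.Sublist y :=
  Nat.sSup_mem (s := {n | ∃ s : List α, s.length = n ∧ s.Sublist x ∧ s.Sublist y})
    ⟨0, [], rfl, List.nil_sublist x, List.nil_sublist y⟩
    ⟨x.length, by rintro _ ⟨s, rfl, hx, -⟩; exact hx.length_le⟩

theorem lcsLength_le_length_left (x y : List α) : lcsLength x y ≤ x.length := by
  obtain ⟨s, hs, hx, -⟩ := exists_sublist_length_eq_lcsLength x y
  exact hs ▸ hx.length_le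

theorem exists_sublist_length_eq_of_le_lcsLength {m : ℕ} {x y : List α}
    (h : m ≤ lcsLength x y) : ∃ s : List α, s.length = m ∧ s.Sublist x ∧ s.Sublist y := by
  obtain ⟨s, hs, hx, hy⟩ := exists_sublist_length_eq_lcsLength x y
  exact ⟨s.take m, List.length_take_of_le (hs ▸ h), (List.take_sublist m s).trans hx,
    (List.take_sublist m s).trans hy⟩

variable [Fintype α]

theorem card_le_lcsLength_le_sum [DecidableEq α] (n m : ℕ) (z : List α) :
    #{x : Fin n → α | m ≤ lcsLength (List.ofFn x) z} ≤
      ∑ s ∈ (z.sublistsLen m).toFinset, #(supersequences n s) := by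
  refine (card_le_card fun x hx => ?_).trans card_biUnion_le
  obtain ⟨s, hs, hsx, hsz⟩ := exists_sublist_length_eq_of_le_lcsLength ((mem_filter_univ x).1 hx)
  exact mem_biUnion.2 ⟨s, List.mem_toFinset.2 (List.mem_sublistsLen.2 ⟨hsz, hs⟩),
    mem_supersequences.2 hsx⟩

theorem card_le_lcsLength_mul_pow_le {t u : ℝ} (ht : 1 ≤ t) (hu : 0 ≤ u) (n m : ℕ) (z : List α) :
    #{x : Fin n → α | m ≤ lcsLength (List.ofFn x) z} * (t * u) ^ m ≤
      (Fintype.card α - 1 + t) ^ n * (1 + u) ^ z.length := by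
  classical
  have card_sublists : #(z.sublistsLen m).toFinset ≤ z.length.choose m :=
    (List.toFinset_card_le _).trans_eq (List.length_sublistsLen ..)
  have card_supersequences_le : ∀ s ∈ (z.sublistsLen m).toFinset,
      #(supersequences n s) * t ^ m ≤ (Fintype.card α - 1 + t) ^ n := by
    intro s hs
    rw [← (List.mem_sublistsLen.1 (List.mem_toFinset.1 hs)).2]
    exact card_supersequences_mul_pow_le ht n s
  have base_nonneg : 0 ≤ Fintype.card α - 1 + t := by
    linarith [Nat.cast_nonneg (α := ℝ) (Fintype.card α)]
  calc (#{x : Fin n → α | m ≤ lcsLength (List.ofFn x) z} : ℝ) * (t * u) ^ m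
      ≤ (∑ s ∈ (z.sublistsLen m).toFinset, #(supersequences n s) : ℕ) * (t * u) ^ m := by
        gcongr
        exact card_le_lcsLength_le_sum n m z
    _ = (∑ s ∈ (z.sublistsLen m).toFinset, #(supersequences n s) * t ^ m) * u ^ m := by
        rw [Nat.cast_sum, ← sum_mul, mul_pow, mul_assoc]
    _ ≤ (z.length.choose m * (Fintype.card α - 1 + t) ^ n) * u ^ m := by
        gcongr
        refine (sum_le_card_nsmul _ _ _ card_supersequences_le).trans ?_
        rw [nsmul_eq_mul]
        gcongr
    _ = (Fintype.card α - 1 + t) ^ n * (z.length.choose m * u ^ m) := by ring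
    _ ≤ (Fintype.card α - 1 + t) ^ n * (1 + u) ^ z.length := by
        gcongr
        exact choose_mul_pow_le hu _ _

end LCS

section Entropy

theorem le_exp_of_mul_pow_le_pow {A w W γ : ℝ} {n m : ℕ} (hw : 1 ≤ w) (hW : 0 < W)
    (hm : γ * n ≤ m) (h : A * w ^ m ≤ W ^ n) : A ≤ exp (n * (log W - γ * log w)) := by
  have w_pos : 0 < w := zero_lt_one.trans_le hw
  calc A ≤ W ^ n / w ^ m := (le_div_iff₀ (by positivity)).2 h
    _ = exp (n * log W - m * log w) := by
        rw [exp_sub, exp_nat_mul, exp_nat_mul, exp_log hW, exp_log w_pos]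
    _ ≤ exp (n * log W - γ * n * log w) := by
        gcongr
        exact log_nonneg hw
    _ = exp (n * (log W - γ * log w)) := by ring_nf

/-- The odds `p / (1 - p)` of an event of probability `p`, the optimal weight per chosen letter in
the entropy bounds (junk value `0` at `p = 1`). -/
noncomputable def odds (p : ℝ) : ℝ := p / (1 - p)

theorem odds_pos {p : ℝ} (hp₀ : 0 < p) (hp₁ : p < 1) : 0 < odds p :=
  div_pos hp₀ (sub_pos.2 hp₁)

theorem one_add_odds {p : ℝ} (hp : p ≠ 1) : 1 + odds p = (1 - p)⁻¹ := by
  have : 1 - p ≠ 0 := sub_ne_zero.2 hp.symm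
  rw [odds]
  field_simp
  ring

theorem one_le_sub_one_mul_odds {q p : ℝ} (hp : p < 1) (hqp : 1 ≤ q * p) :
    1 ≤ (q - 1) * odds p := by
  rw [odds, ← mul_div_assoc, one_le_div (sub_pos.2 hp)]
  linarith

theorem qaryEntropy_one_sub_add_binEntropy_eq {q : ℕ} (hq : 1 < q) {p : ℝ} (hp₀ : 0 < p)
    (hp₁ : p < 1) :
    qaryEntropy q (1 - p) + binEntropy p =
      log ((q - 1 + (q - 1) * odds p) * (1 + odds p)) - p * log ((q - 1) * odds p * odds p) := by
  have : (q : ℝ) - 1 ≠ 0 := sub_ne_zero.2 (by exact_mod_cast hq.ne')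
  have : 1 - p ≠ 0 := sub_ne_zero.2 hp₁.ne'
  have base_eq : (q - 1 + (q - 1) * odds p) * (1 + odds p) = (q - 1) * (1 - p)⁻¹ * (1 - p)⁻¹ := by
    rw [← one_add_odds hp₁.ne]
    ring
  rw [base_eq, odds, qaryEntropy, binEntropy_one_sub, binEntropy]
  push_cast
  rw [log_mul (by positivity) (by positivity), log_mul (by positivity) (by positivity),
    log_mul (by positivity) (by positivity), log_mul (by positivity) (by positivity),
    log_div (by positivity) (by positivity), log_inv, log_inv]
  ring

theorem one_lt_of_one_le_mul {q : ℕ} {p : ℝ} (hp : p < 1) (hqp : 1 ≤ q * p) : 1 < q := by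
  by_contra! hq
  interval_cases q <;> norm_num at hqp
  exact hp.not_ge hqp

theorem one_lt_sub_one_mul_odds_mul_odds {q : ℕ} {p : ℝ} (hp₁ : p < 1) (hqp : 1 ≤ q * p)
    (hE : qaryEntropy q (1 - p) + binEntropy p < log q) : 1 < (q - 1) * odds p * odds p := by
  have hp₀ : 0 < p := pos_of_mul_pos_right (zero_lt_one.trans_le hqp) q.cast_nonneg
  have hq : 1 < q := one_lt_of_one_le_mul hp₁ hqp
  have hodds : 0 < odds p := odds_pos hp₀ hp₁
  have q_sub_one_pos : (0 : ℝ) < q - 1 := sub_pos.2 (by exact_mod_cast hq)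
  have log_q_le : log q ≤ log ((q - 1 + (q - 1) * odds p) * (1 + odds p)) := by
    refine log_le_log (by linarith) ?_
    calc (q : ℝ) ≤ q - 1 + (q - 1) * odds p := by linarith [one_le_sub_one_mul_odds hp₁ hqp]
      _ ≤ (q - 1 + (q - 1) * odds p) * (1 + odds p) :=
        le_mul_of_one_le_right (by positivity) (by linarith)
  rw [qaryEntropy_one_sub_add_binEntropy_eq hq hp₀ hp₁] at hE
  have log_weight_pos : 0 < log ((q - 1) * odds p * odds p) :=
    pos_of_mul_pos_right (by linarith) hp₀.le
  exact (log_pos_iff (by positivity)).1 log_weight_pos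

theorem mul_log_sub_log_le_sub {p r : ℝ} (hp : 0 < p) (hr : 0 < r) :
    p * (log r - log p) ≤ r - p := by
  rw [← log_div hr.ne' hp.ne']
  calc p * log (r / p) ≤ p * (r / p - 1) := by
        gcongr
        exact log_le_sub_one_of_pos (by positivity)
    _ = r - p := by field_simp

theorem binEntropy_le_crossEntropy {p r : ℝ} (hp₀ : 0 < p) (hp₁ : p < 1) (hr₀ : 0 < r)
    (hr₁ : r < 1) : binEntropy p ≤ -(p * log r) - (1 - p) * log (1 - r) := by
  rw [binEntropy, log_inv, log_inv]
  linarith [mul_log_sub_log_le_sub hp₀ hr₀,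
    mul_log_sub_log_le_sub (sub_pos.2 hp₁) (sub_pos.2 hr₁)]

-- `401 / 253` lies between `log₂ 3 = 1.58496…` and `(1 + 6 * 0.88999) / 4 = 1.584985`, the largest
-- value of `log₂ 3` that the next lemma could afford.
set_option exponentiation.threshold 401 in
theorem log_three_lt : log 3 < 401 / 253 * log 2 := by
  have log_pow_lt : log (3 ^ 253) < log (2 ^ 401) := log_lt_log (by positivity) (by norm_num)
  rw [log_pow, log_pow] at log_pow_lt
  push_cast at log_pow_lt
  linarith

theorem two_mul_binEntropy_lt_log_two : 2 * binEntropy 0.88999 < log 2 := by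
  have log_eight_ninths : log (8 / 9) = 3 * log 2 - 2 * log 3 := by
    rw [log_div (by norm_num) (by norm_num), show (8 : ℝ) = 2 ^ 3 by norm_num,
      show (9 : ℝ) = 3 ^ 2 by norm_num, log_pow, log_pow]
    norm_cast
  have log_one_ninth : log (1 - 8 / 9) = -(2 * log 3) := by
    rw [show (1 - 8 / 9 : ℝ) = (3 ^ 2)⁻¹ by norm_num, log_inv, log_pow]
    norm_cast
  -- The cross entropy is least at `r = 0.88999`; the nearby `8 / 9` involves only `log 2`, `log 3`.
  have cross_entropy_bound : binEntropy 0.88999 ≤ 2 * log 3 - 3 * 0.88999 * log 2 := by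
    refine (binEntropy_le_crossEntropy (r := 8 / 9) (by norm_num) (by norm_num) (by norm_num)
      (by norm_num)).trans_eq ?_
    rw [log_eight_ninths, log_one_ninth]
    ring
  have log_two_pos : 0 < log 2 := log_pos one_lt_two
  linarith [log_three_lt]

end Entropy

theorem card_mul_le_lcsLength_le_exp {α : Type*} [Fintype α] {γ : ℝ}
    (hγ : 1 ≤ Fintype.card α * γ) (hγ₁ : γ < 1)
    (hE : qaryEntropy (Fintype.card α) (1 - γ) + binEntropy γ < log (Fintype.card α))
    {n : ℕ} {z : List α} (hz : z.length ≤ n) :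
    #{x : Fin n → α | γ * n ≤ lcsLength (List.ofFn x) z} ≤
      exp (n * (qaryEntropy (Fintype.card α) (1 - γ) + binEntropy γ)) := by
  have hγ₀ : 0 < γ := pos_of_mul_pos_right (zero_lt_one.trans_le hγ) (Nat.cast_nonneg _)
  have one_lt_card : 1 < Fintype.card α := one_lt_of_one_le_mul hγ₁ hγ
  have card_sub_one_pos : (0 : ℝ) < Fintype.card α - 1 := sub_pos.2 (by exact_mod_cast one_lt_card)
  have hodds : 0 < odds γ := odds_pos hγ₀ hγ₁
  simp only [← Nat.ceil_le]
  rw [qaryEntropy_one_sub_add_binEntropy_eq one_lt_card hγ₀ hγ₁]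
  refine le_exp_of_mul_pow_le_pow (one_lt_sub_one_mul_odds_mul_odds hγ₁ hγ hE).le
    (by positivity) (Nat.le_ceil _) ?_
  calc _ ≤ (Fintype.card α - 1 + (Fintype.card α - 1) * odds γ) ^ n * (1 + odds γ) ^ z.length :=
        card_le_lcsLength_mul_pow_le (one_le_sub_one_mul_odds hγ₁ hγ) hodds.le _ _ z
    _ ≤ (Fintype.card α - 1 + (Fintype.card α - 1) * odds γ) ^ n * (1 + odds γ) ^ n := by
        gcongr
        linarith
    _ = ((Fintype.card α - 1 + (Fintype.card α - 1) * odds γ) * (1 + odds γ)) ^ n :=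
        (mul_pow _ _ _).symm

theorem sum_le_card_mul_add_card_filter_mul {ι R : Type*} [Semiring R] [LinearOrder R]
    [IsOrderedAddMonoid R] (s : Finset ι) {f : ι → R} {a b : R} (ha : 0 ≤ a)
    (hb : ∀ i ∈ s, f i ≤ b) : ∑ i ∈ s, f i ≤ #s * a + #{i ∈ s | a ≤ f i} * b := by
  calc ∑ i ∈ s, f i ≤ ∑ i ∈ s, (a + if a ≤ f i then b else 0) := by
        refine sum_le_sum fun i hi => ?_
        split_ifs with h
        · exact (hb i hi).trans (le_add_of_nonneg_left ha)
        · exact (not_le.1 h).le.trans_eq (add_zero a).symm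
    _ = #s * a + #{i ∈ s | a ≤ f i} * b := by
        rw [sum_add_distrib, ← sum_filter, sum_const, sum_const, nsmul_eq_mul, nsmul_eq_mul]

theorem sum_lcsLength_div_le {α : Type*} [Fintype α] [Nonempty α] {γ : ℝ} (hγ : 0 ≤ γ) (n : ℕ)
    (z : List α) :
    (∑ x : Fin n → α, (lcsLength (List.ofFn x) z : ℝ)) / (Fintype.card α : ℝ) ^ n ≤
      (γ + #{x : Fin n → α | γ * n ≤ lcsLength (List.ofFn x) z} / (Fintype.card α : ℝ) ^ n) *
        n := by
  have lcsLength_le : ∀ x ∈ (univ : Finset (Fin n → α)), (lcsLength (List.ofFn x) z : ℝ) ≤ n :=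
    fun x _ => by exact_mod_cast (lcsLength_le_length_left _ z).trans_eq List.length_ofFn
  have : (0 : ℝ) < Fintype.card α := by exact_mod_cast Fintype.card_pos
  rw [div_le_iff₀ (by positivity)]
  refine (sum_le_card_mul_add_card_filter_mul _ (mul_nonneg hγ n.cast_nonneg)
    lcsLength_le).trans_eq ?_
  rw [card_univ, Fintype.card_fun, Fintype.card_fin]
  push_cast
  field_simp

theorem stmt13_general {α : Type*} [Fintype α] {γ : ℝ} (hγ : 1 ≤ Fintype.card α * γ) (hγ₁ : γ < 1)
    (hE : qaryEntropy (Fintype.card α) (1 - γ) + binEntropy γ < log (Fintype.card α)) :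
    ∀ ε : ℝ, 0 < ε → ∃ N : ℕ, ∀ n : ℕ, N ≤ n → ∀ z : List α, z.length ≤ n →
      (#{x : Fin n → α | γ * n ≤ lcsLength (List.ofFn x) z} : ℝ) / (Fintype.card α : ℝ) ^ n ≤ ε ∧
      (∑ x : Fin n → α, (lcsLength (List.ofFn x) z : ℝ)) / (Fintype.card α : ℝ) ^ n ≤
        (γ + ε) * n := by
  intro ε hε
  have hγ₀ : 0 < γ := pos_of_mul_pos_right (zero_lt_one.trans_le hγ) (Nat.cast_nonneg _)
  have card_pos : (0 : ℝ) < Fintype.card α :=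
    pos_of_mul_pos_left (zero_lt_one.trans_le hγ) hγ₀.le
  have : Nonempty α := Fintype.card_pos_iff.1 (by exact_mod_cast card_pos)
  set E := qaryEntropy (Fintype.card α) (1 - γ) + binEntropy γ
  have rate_lt_one : exp E / Fintype.card α < 1 :=
    (div_lt_one card_pos).2 ((lt_log_iff_exp_lt card_pos).1 hE)
  obtain ⟨N, hN⟩ := exists_pow_lt_of_lt_one hε rate_lt_one
  refine ⟨N, fun n hn z hz => ?_⟩
  have prob_le : (#{x : Fin n → α | γ * n ≤ lcsLength (List.ofFn x) z} : ℝ) /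
      (Fintype.card α : ℝ) ^ n ≤ ε := by
    calc _ ≤ exp (n * E) / (Fintype.card α : ℝ) ^ n := by
          gcongr
          exact card_mul_le_lcsLength_le_exp hγ hγ₁ hE hz
      _ = (exp E / Fintype.card α) ^ n := by rw [exp_nat_mul, div_pow]
      _ ≤ (exp E / Fintype.card α) ^ N :=
          pow_le_pow_of_le_one (by positivity) rate_lt_one.le hn
      _ ≤ ε := hN.le
  refine ⟨prob_le, (sum_lcsLength_div_le hγ₀.le n z).trans ?_⟩
  gcongr

open Classical in
/-- For every `z ∈ {0,1}ⁿ`, the probability over uniform `X ∈ {0,1}ⁿ` that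
`|LCS(X,z)| ≥ 0.88999 n` is `o(1)`; consequently
`max_z E_X[|LCS(X,z)|] ≤ (0.88999 + o(1)) n`. -/
theorem stmt13 :
    ∀ ε : ℝ, 0 < ε → ∃ N : ℕ, ∀ n : ℕ, N ≤ n → ∀ z : List Bool, z.length = n →
      ((Finset.univ.filter fun x : Fin n → Bool =>
          (0.88999 : ℝ) * n ≤ (lcsLen (List.ofFn x) z : ℝ)).card : ℝ) / 2 ^ n ≤ ε ∧
      (∑ x : Fin n → Bool, (lcsLen (List.ofFn x) z : ℝ)) / 2 ^ n ≤ (0.88999 + ε) * n := by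
  intro ε hε
  obtain ⟨N, hN⟩ := stmt13_general (α := Bool) (γ := 0.88999) (by norm_num) (by norm_num)
    (by simpa [← two_mul] using two_mul_binEntropy_lt_log_two) ε hε
  refine ⟨N, fun n hn z hz => ?_⟩
  rw [lcsLen_eq_lcsLength]
  convert hN n hn z hz.le <;> simp only [Fintype.card_bool, Nat.cast_ofNat]
end

section
/- Let M = ((v_1,v'_1),...,(v_t,v'_t)) be a candidate matching (v_1 < ... < v_t, v'_1 < ... < v'_t in [n]) and let S = {s_1 < ... < s_m}, S' = {s'_1 < ... < s'_m} be m-element subsets of [n] with score l, where the score is the number of indices i such that (v_i, v'_i) = (s_j, s'_j) for some common j. Construct random n-bit strings X and X' by: drawing y uniform in {0,1}^m and placing y_j at position s_j of X and at position s'_j of X', and filling all remaining positions of X and X' with independent uniform bits. Then the probability that X_{v_i} = X'_{v'_i} holds for all i in [t] is exactly 2^{-(t-l)}. -/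
/-- Fill positions: the `n`-bit string whose bit at position `s j` is `y j`
(for each `j`), and whose remaining bits are taken from `r`. -/
noncomputable def fill {n m : ℕ} (s : Fin m → Fin n) (y : Fin m → Bool)
    (r : Fin n → Bool) : Fin n → Bool :=
  fun i => if h : ∃ j, s j = i then y h.choose else r i

/-!
Every letter of the two strings is a copy of one of the independent uniform variables: a letter of
`y`, or a private letter of one of the strings. An edge of the matching demands that two of these
variables agree, and for a synched edge the two variables are the same. Process the edges from left
to right. If both variables of an edge had occurred earlier, then one occurrence would be shared
through some `(s j, s' j)` and the other through some `(s j', s' j')`, where monotonicity on one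
side gives `j' < j` and on the other `j < j'`. So each unsynched edge involves a variable that is
still free, and agreement costs exactly a factor equal to the size of the alphabet.
-/

open Function

section Agreement

variable {ι V K : Type*}

theorem card_and_apply_eq_mul_card [DecidableEq V] {P : (V → K) → Prop} {p q : V} (hpq : p ≠ q)
    (hP : ∀ f c, P f → P (update f p c)) :
    Nat.card {f // P f ∧ f p = f q} * Nat.card K = Nat.card {f // P f} := by
  rw [← Nat.card_prod]
  exact Nat.card_congr
    { toFun := fun x => ⟨update x.1 p x.2, hP _ _ x.1.2.1⟩
      invFun := fun f => (⟨update f p (f.1 q), hP _ _ f.2, by simp [hpq.symm]⟩, f.1 p)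
      left_inv := by
        rintro ⟨⟨f, hf, hfpq⟩, c⟩
        simp [hpq.symm, ← hfpq]
      right_inv := by
        rintro ⟨f, hf⟩
        simp }

/-- The edges `{a i, b i}`, listed in the order of `ι`, each have an endpoint that lies on no
earlier edge. Loops `a i = b i` are allowed; apart from them such a graph is a forest. -/
def HasFreshEndpoints [LT ι] (a b : ι → V) : Prop :=
  ∀ i, (∀ k < i, a i ≠ a k ∧ a i ≠ b k) ∨ (∀ k < i, b i ≠ a k ∧ b i ≠ b k)

theorem HasFreshEndpoints.card_forall_mem_apply_eq_mul_pow [LinearOrder ι] [DecidableEq V]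
    {a b : ι → V} (hab : HasFreshEndpoints a b) (F : Finset ι) :
    Nat.card {f : V → K // ∀ i ∈ F, f (a i) = f (b i)}
        * Nat.card K ^ (F.filter fun i => a i ≠ b i).card
      = Nat.card (V → K) := by
  induction F using Finset.induction_on_max with
  | empty => simp
  | insert i F hlt ih =>
    have hi : i ∉ F := fun h => lt_irrefl i (hlt i h)
    simp only [Finset.forall_mem_insert]
    by_cases hloop : a i = b i
    · simpa [Finset.filter_insert, hloop] using ih
    have invariant {p : V} (hp : ∀ k < i, p ≠ a k ∧ p ≠ b k) (f : V → K) (c : K)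
        (hf : ∀ k ∈ F, f (a k) = f (b k)) : ∀ k ∈ F, update f p c (a k) = update f p c (b k) := by
      intro k hk
      obtain ⟨hpa, hpb⟩ := hp k (hlt k hk)
      rw [update_of_ne hpa.symm, update_of_ne hpb.symm, hf k hk]
    have step : Nat.card {f : V → K // f (a i) = f (b i) ∧ ∀ k ∈ F, f (a k) = f (b k)} * Nat.card K
        = Nat.card {f : V → K // ∀ k ∈ F, f (a k) = f (b k)} := by
      rcases hab i with ha | hb
      · simpa only [and_comm] using card_and_apply_eq_mul_card hloop (invariant ha)
      · simpa only [and_comm, eq_comm] using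
          card_and_apply_eq_mul_card (Ne.symm hloop) (invariant hb)
    rw [Finset.filter_insert, if_pos hloop, Finset.card_insert_of_notMem (by simp [hi]), pow_succ',
      ← mul_assoc, step, ih]

theorem HasFreshEndpoints.card_forall_apply_eq_mul_pow [LinearOrder ι] [Finite ι] {a b : ι → V}
    (hab : HasFreshEndpoints a b) :
    Nat.card {f : V → K // ∀ i, f (a i) = f (b i)} * Nat.card K ^ Nat.card {i // a i ≠ b i}
      = Nat.card (V → K) := by
  classical
  have := Fintype.ofFinite ι
  simpa [Fintype.card_subtype] using hab.card_forall_mem_apply_eq_mul_pow (K := K) Finset.univ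

end Agreement

section Source

variable {ι κ α β γ K : Type*}

/-- The variable that the letter at position `p` copies when a string is planted along `s`: `inl j`
is the `j`-th planted letter and `inr (e p)` the letter that is private to `p`. -/
noncomputable def source (s : κ → α) (e : α → γ) : α → κ ⊕ γ :=
  extend s Sum.inl (Sum.inr ∘ e)

theorem apply_source (s : κ → α) (e : α → γ) (f : κ ⊕ γ → K) (p : α) :
    f (source s e p) = extend s (f ∘ Sum.inl) (f ∘ Sum.inr ∘ e) p :=
  apply_extend f s (Sum.inr ∘ e) p

theorem source_apply {s : κ → α} (hs : Injective s) (e : α → γ) (j : κ) :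
    source s e (s j) = Sum.inl j :=
  hs.extend_apply ..

theorem source_cases (s : κ → α) (e : α → γ) (p : α) :
    (∃ j, s j = p ∧ source s e p = Sum.inl j) ∨ source s e p = Sum.inr (e p) := by
  classical
  by_cases h : ∃ j, s j = p
  · exact .inl ⟨h.choose, h.choose_spec, by rw [source, extend_def, dif_pos h]⟩
  · exact .inr (extend_apply' _ _ _ h)

theorem source_injective (s : κ → α) {e : α → γ} (he : Injective e) : Injective (source s e) := by
  intro p q hpq
  rcases source_cases s e p with ⟨j, rfl, hp⟩ | hp <;>
    rcases source_cases s e q with ⟨k, rfl, hq⟩ | hq <;>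
      simp_all [he.eq_iff]

theorem source_inl_eq_source_inr_iff {s : κ → α} {s' : κ → β} (hs : Injective s)
    (hs' : Injective s') {p : α} {q : β} :
    source s (Sum.inl : α → α ⊕ β) p = source s' Sum.inr q ↔ ∃ j, s j = p ∧ s' j = q := by
  constructor
  · intro hpq
    rcases source_cases s (Sum.inl : α → α ⊕ β) p with ⟨j, rfl, hp⟩ | hp <;>
      rcases source_cases s' (Sum.inr : β → α ⊕ β) q with ⟨k, rfl, hq⟩ | hq <;>
        grind
  · rintro ⟨j, rfl, rfl⟩
    rw [source_apply hs, source_apply hs']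

theorem hasFreshEndpoints_source [LinearOrder ι] [LinearOrder κ] [Preorder α] [Preorder β]
    {v : ι → α} {v' : ι → β} {s : κ → α} {s' : κ → β}
    (hv : StrictMono v) (hv' : StrictMono v') (hs : StrictMono s) (hs' : StrictMono s') :
    HasFreshEndpoints (fun i => source s (Sum.inl : α → α ⊕ β) (v i))
      (fun i => source s' Sum.inr (v' i)) := by
  have shared {p : α} {q : β} := source_inl_eq_source_inr_iff (p := p) (q := q) hs.injective
    hs'.injective
  have left_ne {i k : ι} (hk : k < i) :
      source s (Sum.inl : α → α ⊕ β) (v i) ≠ source s _ (v k) :=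
    (source_injective s Sum.inl_injective).ne (hv hk).ne'
  have right_ne {i k : ι} (hk : k < i) :
      source s' (Sum.inr : β → α ⊕ β) (v' i) ≠ source s' _ (v' k) :=
    (source_injective s' Sum.inr_injective).ne (hv' hk).ne'
  intro i
  by_cases hi : ∃ k < i, source s (Sum.inl : α → α ⊕ β) (v i) = source s' Sum.inr (v' k)
  · right
    obtain ⟨k, hki, hk⟩ := hi
    obtain ⟨j, hj, hj'⟩ := shared.mp hk
    refine fun l hli => ⟨fun hl => ?_, right_ne hli⟩
    obtain ⟨j₁, hj₁, hj₁'⟩ := shared.mp hl.symm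
    have hlt : j₁ < j := hs.lt_iff_lt.mp (by rw [hj₁, hj]; exact hv hli)
    have hgt : j < j₁ := hs'.lt_iff_lt.mp (by rw [hj', hj₁']; exact hv' hki)
    exact lt_asymm hlt hgt
  · left
    push Not at hi
    exact fun k hk => ⟨left_ne hk, hi k hk⟩

theorem card_forall_extend_apply_eq (v : ι → α) (v' : ι → β) (s : κ → α) (s' : κ → β) :
    Nat.card {ω : (κ → K) × (α → K) × (β → K) //
        ∀ i, extend s ω.1 ω.2.1 (v i) = extend s' ω.1 ω.2.2 (v' i)}
      = Nat.card {f : κ ⊕ α ⊕ β → K //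
        ∀ i, f (source s Sum.inl (v i)) = f (source s' Sum.inr (v' i))} := by
  let splitEquiv : (κ ⊕ α ⊕ β → K) ≃ (κ → K) × (α → K) × (β → K) :=
    (Equiv.sumArrowEquivProdArrow _ _ _).trans
      ((Equiv.refl _).prodCongr (Equiv.sumArrowEquivProdArrow _ _ _))
  refine (Nat.card_congr (splitEquiv.subtypeEquiv fun f => ?_)).symm
  simp only [apply_source]
  rfl

end Source

theorem stmt17_general {ι κ α β K : Type*} [LinearOrder ι] [Finite ι] [LinearOrder κ] [Finite κ]
    [Preorder α] [Finite α] [Preorder β] [Finite β] [Finite K] [Nonempty K]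
    {v : ι → α} {v' : ι → β} {s : κ → α} {s' : κ → β}
    (hv : StrictMono v) (hv' : StrictMono v') (hs : StrictMono s) (hs' : StrictMono s') :
    (Nat.card {ω : (κ → K) × (α → K) × (β → K) //
        ∀ i, extend s ω.1 ω.2.1 (v i) = extend s' ω.1 ω.2.2 (v' i)} : ℝ)
        / Nat.card ((κ → K) × (α → K) × (β → K))
      = 1 / (Nat.card K : ℝ) ^ (Nat.card ι - Nat.card {i // ∃ j, s j = v i ∧ s' j = v' i}) := by
  classical
  have := Fintype.ofFinite ι
  have count := (hasFreshEndpoints_source hv hv' hs hs').card_forall_apply_eq_mul_pow (K := K)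
  have unsynched : Nat.card {i // ¬ ∃ j, s j = v i ∧ s' j = v' i}
      = Nat.card ι - Nat.card {i // ∃ j, s j = v i ∧ s' j = v' i} := by
    simp only [Nat.card_eq_fintype_card, Fintype.card_subtype_compl]
  have space : Nat.card (κ ⊕ α ⊕ β → K) = Nat.card ((κ → K) × (α → K) × (β → K)) := by
    simp [Nat.card_fun, Nat.card_sum, pow_add]
  simp only [ne_eq, source_inl_eq_source_inr_iff hs.injective hs'.injective] at count
  rw [unsynched, ← card_forall_extend_apply_eq, space] at count
  have space_ne_zero : Nat.card ((κ → K) × (α → K) × (β → K)) ≠ 0 := Nat.card_pos.ne'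
  have card_ne_zero : Nat.card K ≠ 0 := Nat.card_pos.ne'
  rw [div_eq_div_iff (by positivity) (by positivity), one_mul]
  exact_mod_cast count

theorem fill_eq_extend {n m : ℕ} (s : Fin m → Fin n) (y : Fin m → Bool) (r : Fin n → Bool) :
    fill s y r = extend s y r := by
  funext i
  unfold fill extend
  split_ifs <;> rfl

/-- Given a candidate matching `M = ((v₁,v'₁),…,(v_t,v'_t))` and sets
`S = {s₁ < ⋯ < s_m}`, `S' = {s'₁ < ⋯ < s'_m}` with score `l` (the number of
edges `(vᵢ, v'ᵢ)` equal to `(s_j, s'_j)` for a common `j`), if `X` (resp. `X'`)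
places a uniform `y ∈ {0,1}^m` at the positions of `S` (resp. `S'`) and
independent uniform bits elsewhere, then
`Pr[∀ i, X_{vᵢ} = X'_{v'ᵢ}] = 2^{-(t-l)}`. -/
theorem stmt17 (n m t : ℕ) (v v' : Fin t → Fin n) (s s' : Fin m → Fin n)
    (hv : StrictMono v) (hv' : StrictMono v') (hs : StrictMono s) (hs' : StrictMono s') :
    (Nat.card {ω : (Fin m → Bool) × (Fin n → Bool) × (Fin n → Bool) //
        ∀ i : Fin t, fill s ω.1 ω.2.1 (v i) = fill s' ω.1 ω.2.2 (v' i)} : ℝ)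
        / ((2 : ℝ) ^ m * 2 ^ n * 2 ^ n)
      = 1 / 2 ^ (t - Nat.card {i : Fin t // ∃ j : Fin m, s j = v i ∧ s' j = v' i}) := by
  have h := stmt17_general (K := Bool) hv hv' hs hs'
  simpa [fill_eq_extend, mul_assoc] using h
end
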